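/- Let α > 0. There exists a constant c > 0, depending only on L, h and α, such that for every u of class C² on M̄, vanishing on the lateral boundary Γ_l = {0,L}×[−h,0] and on the bottom Γ_b = [0,L]×{−h}, satisfying ∂_z u(x,0) + α u(x,0) = 0 for all x and ∫_{−h}^0 u(x,z) dz = 0 for all x, one has | ∫_M ( u ∂_x u + w(u) ∂_z u ) · ( −Q ∂_{zz} u ) dM | ≤ c ( |u| ‖u‖_{H¹}² + |∂_z u|^{1/2} ‖∂_z u‖_{H¹}^{1/2} |u|^{1/2} ‖u‖_{H¹}^{3/2} ), where Qg = g − (1/h) ∫_{−h}^0 g(·,s) ds. -/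

import Mathlib

open MeasureTheory Set intervalIntegral

/-- Partial derivative in the first (horizontal, `x`) variable. -/
noncomputable def pdx (f : ℝ × ℝ → ℝ) (p : ℝ × ℝ) : ℝ := fderiv ℝ f p (1, 0)

/-- Partial derivative in the second (vertical, `z`) variable. -/
noncomputable def pdz (f : ℝ × ℝ → ℝ) (p : ℝ × ℝ) : ℝ := fderiv ℝ f p (0, 1)

/-- The diagnostic vertical velocity `w(u)(x,z) = ∫_z^0 ∂ₓ u(x,s) ds`. -/
noncomputable def wOp (u : ℝ × ℝ → ℝ) (p : ℝ × ℝ) : ℝ := ∫ s in p.2..0, pdx u (p.1, s)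

/-- The open domain `M = (0,L) × (-h,0)`. -/
def dom (L h : ℝ) : Set (ℝ × ℝ) := Ioo 0 L ×ˢ Ioo (-h) 0

/-- The closed domain `M̄ = [0,L] × [-h,0]`. -/
def cdom (L h : ℝ) : Set (ℝ × ℝ) := Icc 0 L ×ˢ Icc (-h) 0

/-- The `L²(M)` norm. -/
noncomputable def l2 (L h : ℝ) (f : ℝ × ℝ → ℝ) : ℝ :=
  Real.sqrt (∫ p in dom L h, f p ^ 2)

/-- The `H¹(M)` norm. -/
noncomputable def h1n (L h : ℝ) (f : ℝ × ℝ → ℝ) : ℝ :=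
  Real.sqrt (l2 L h f ^ 2 + l2 L h (pdx f) ^ 2 + l2 L h (pdz f) ^ 2)

/-- The `H²(M)` norm. -/
noncomputable def h2n (L h : ℝ) (f : ℝ × ℝ → ℝ) : ℝ :=
  Real.sqrt (h1n L h f ^ 2 + l2 L h (pdx (pdx f)) ^ 2 + l2 L h (pdx (pdz f)) ^ 2
    + l2 L h (pdz (pdz f)) ^ 2)

/-- The orthogonal complement `Q` of the vertical averaging operator:
`(Q g)(x,z) = g(x,z) - (1/h) ∫_{-h}^0 g(x,s) ds`. -/
noncomputable def Qop (h : ℝ) (g : ℝ × ℝ → ℝ) (p : ℝ × ℝ) : ℝ :=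
  g p - (1 / h) * ∫ s in (-h)..(0:ℝ), g (p.1, s)


theorem aux_integrable (L h : ℝ) (F : ℝ × ℝ → ℝ) (hF : Continuous F) :
    IntegrableOn F (dom L h) := by
  have : IntegrableOn F (Icc (0:ℝ) L ×ˢ Icc (-h) (0:ℝ)) :=
    hF.continuousOn.integrableOn_compact (isCompact_Icc.prod isCompact_Icc)
  exact this.mono_set (Set.prod_mono Ioo_subset_Icc_self Ioo_subset_Icc_self)

theorem aux_dom (L h : ℝ) (hL : 0 ≤ L) (hh : 0 ≤ h) (F : ℝ × ℝ → ℝ) (hF : Continuous F) :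
    ∫ p in dom L h, F p = ∫ x in (0:ℝ)..L, ∫ z in (-h)..(0:ℝ), F (x, z) := by
  have h1 := aux_integrable L h F hF
  unfold dom at *
  rw [Measure.volume_eq_prod] at *
  rw [setIntegral_prod F h1]
  rw [intervalIntegral.integral_of_le hL, integral_Ioc_eq_integral_Ioo]
  congr 1
  ext x
  rw [intervalIntegral.integral_of_le (by linarith), integral_Ioc_eq_integral_Ioo]

theorem aux_dom_swap (L h : ℝ) (hL : 0 ≤ L) (hh : 0 ≤ h) (F : ℝ × ℝ → ℝ) (hF : Continuous F) :
    ∫ p in dom L h, F p = ∫ z in (-h)..(0:ℝ), ∫ x in (0:ℝ)..L, F (x, z) := by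
  have h1 := aux_integrable L h F hF
  unfold dom at *
  rw [Measure.volume_eq_prod] at *
  have h2 : IntegrableOn (fun q : ℝ × ℝ => F q.swap) (Ioo (-h) 0 ×ˢ Ioo 0 L)
      ((volume : Measure ℝ).prod (volume : Measure ℝ)) := by
    have : IntegrableOn (fun q : ℝ × ℝ => F q.swap) (Icc (-h) (0:ℝ) ×ˢ Icc (0:ℝ) L)
      ((volume : Measure ℝ).prod (volume : Measure ℝ)) :=
      (hF.comp continuous_swap).continuousOn.integrableOn_compact
        (isCompact_Icc.prod isCompact_Icc)
    exact this.mono_set (Set.prod_mono Ioo_subset_Icc_self Ioo_subset_Icc_self)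
  rw [← setIntegral_prod_swap, setIntegral_prod _ h2]
  rw [intervalIntegral.integral_of_le (by linarith), integral_Ioc_eq_integral_Ioo]
  congr 1
  ext x
  rw [intervalIntegral.integral_of_le hL, integral_Ioc_eq_integral_Ioo]
  rfl

theorem aux_l2_sq (L h : ℝ) (f : ℝ × ℝ → ℝ) : l2 L h f ^ 2 = ∫ p in dom L h, f p ^ 2 := by
  unfold l2
  exact Real.sq_sqrt (integral_nonneg fun p => sq_nonneg _)

theorem aux_l2_nonneg (L h : ℝ) (f : ℝ × ℝ → ℝ) : 0 ≤ l2 L h f := Real.sqrt_nonneg _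

theorem aux_cs (L h : ℝ) (f g : ℝ × ℝ → ℝ) (hf : Continuous f) (hg : Continuous g) :
    |∫ p in dom L h, f p * g p| ≤ l2 L h f * l2 L h g := by
  have key : ∀ t : ℝ, 0 ≤ (∫ p in dom L h, f p ^ 2) * (t * t)
      + (2 * ∫ p in dom L h, f p * g p) * t + ∫ p in dom L h, g p ^ 2 := by
    intro t
    have h0 : 0 ≤ ∫ p in dom L h, (t * f p + g p) ^ 2 := integral_nonneg fun p => sq_nonneg _
    have e : ∫ p in dom L h, (t * f p + g p) ^ 2 =
        ∫ p in dom L h, (((t * t) * f p ^ 2 + (2 * t) * (f p * g p)) + g p ^ 2) := by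
      congr 1; ext p; ring
    rw [e, MeasureTheory.integral_add, MeasureTheory.integral_add, MeasureTheory.integral_const_mul,
      MeasureTheory.integral_const_mul] at h0
    · linarith
    · exact aux_integrable L h _ (by fun_prop)
    · exact aux_integrable L h _ (by fun_prop)
    · exact aux_integrable L h _ (by fun_prop)
    · exact aux_integrable L h _ (by fun_prop)
  have hd := discrim_le_zero key
  unfold discrim at hd
  rw [← aux_l2_sq, ← aux_l2_sq] at hd
  apply abs_le_of_sq_le_sq _ (mul_nonneg (aux_l2_nonneg _ _ _) (aux_l2_nonneg _ _ _))
  nlinarith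

theorem aux_cs_abs (L h : ℝ) (f g : ℝ × ℝ → ℝ) (hf : Continuous f) (hg : Continuous g) :
    ∫ p in dom L h, |f p * g p| ≤ l2 L h f * l2 L h g := by
  have := aux_cs L h (fun p => |f p|) (fun p => |g p|) hf.abs hg.abs
  have e : ∀ k : ℝ × ℝ → ℝ, l2 L h (fun p => |k p|) = l2 L h k := by
    intro k; unfold l2; simp
  rw [e, e] at this
  refine le_trans (le_of_eq ?_) ((le_abs_self _).trans this)
  simp [abs_mul]

/-- sup over x of the vertical L2 norm -/
theorem aux_sup (L h : ℝ) (hL : 0 < L) (hh : 0 < h) (u ux : ℝ × ℝ → ℝ) (hu : Continuous u)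
    (hux : Continuous ux) (hd : ∀ x z, HasDerivAt (fun t => u (t, z)) (ux (x, z)) x)
    (h0 : ∀ z ∈ Icc (-h) (0:ℝ), u (0, z) = 0) (x : ℝ) (hx : x ∈ Icc (0:ℝ) L) :
    ∫ z in (-h)..(0:ℝ), u (x, z) ^ 2 ≤ 2 * (l2 L h u * l2 L h ux) := by
  have h1 : ∀ z ∈ Icc (-h) (0:ℝ), u (x, z) ^ 2 ≤ ∫ t in (0:ℝ)..L, 2 * |u (t, z) * ux (t, z)| := by
    intro z hz
    have e : ∫ t in (0:ℝ)..x, 2 * (u (t, z) * ux (t, z)) = u (x, z) ^ 2 - u (0, z) ^ 2 := by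
      apply intervalIntegral.integral_eq_sub_of_hasDerivAt (f := fun t => u (t, z) ^ 2)
      · intro t _
        refine ((hd t z).pow 2).congr_deriv ?_
        simp; ring
      · exact Continuous.intervalIntegrable (by fun_prop) _ _
    rw [h0 z hz] at e
    have e2 : u (x, z) ^ 2 = ∫ t in (0:ℝ)..x, 2 * (u (t, z) * ux (t, z)) := by rw [e]; ring
    rw [e2]
    calc _ ≤ ∫ t in (0:ℝ)..x, 2 * |u (t, z) * ux (t, z)| := by
          apply intervalIntegral.integral_mono_on hx.1
          · exact Continuous.intervalIntegrable (by fun_prop) _ _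
          · exact Continuous.intervalIntegrable (by fun_prop) _ _
          · intro t _
            have := le_abs_self (u (t, z) * ux (t, z))
            linarith
      _ ≤ _ := by
          apply intervalIntegral.integral_mono_interval le_rfl hx.1 hx.2
          · exact Filter.Eventually.of_forall fun t => by
              show (0:ℝ) ≤ 2 * |u (t, z) * ux (t, z)|
              positivity
          · exact Continuous.intervalIntegrable (by fun_prop) _ _
  calc _ ≤ ∫ z in (-h)..(0:ℝ), ∫ t in (0:ℝ)..L, 2 * |u (t, z) * ux (t, z)| := by
        apply intervalIntegral.integral_mono_on (by linarith)
        · exact Continuous.intervalIntegrable (by fun_prop) _ _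
        · apply Continuous.intervalIntegrable
          apply intervalIntegral.continuous_parametric_intervalIntegral_of_continuous'
          unfold Function.uncurry
          fun_prop
        · exact h1
    _ = ∫ p in dom L h, 2 * |u p * ux p| := by
        rw [aux_dom_swap L h hL.le hh.le _ (by fun_prop)]
    _ = 2 * ∫ p in dom L h, |u p * ux p| := by rw [MeasureTheory.integral_const_mul]
    _ ≤ _ := by
        have := aux_cs_abs L h u ux hu hux
        linarith

/-- trace at the top for functions vanishing at the bottom -/
theorem aux_top (L h : ℝ) (hL : 0 < L) (hh : 0 < h) (u uz : ℝ × ℝ → ℝ) (hu : Continuous u)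
    (huz : Continuous uz) (hd : ∀ x z, HasDerivAt (fun t => u (x, t)) (uz (x, z)) z)
    (h0 : ∀ x ∈ Icc (0:ℝ) L, u (x, -h) = 0) :
    ∫ x in (0:ℝ)..L, u (x, 0) ^ 2 ≤ 2 * (l2 L h u * l2 L h uz) := by
  have h1 : ∀ x ∈ Icc (0:ℝ) L, u (x, 0) ^ 2 ≤ ∫ z in (-h)..(0:ℝ), 2 * |u (x, z) * uz (x, z)| := by
    intro x hx
    have e : ∫ z in (-h)..(0:ℝ), 2 * (u (x, z) * uz (x, z)) = u (x, 0) ^ 2 - u (x, -h) ^ 2 := by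
      apply intervalIntegral.integral_eq_sub_of_hasDerivAt (f := fun t => u (x, t) ^ 2)
      · intro t _
        refine ((hd x t).pow 2).congr_deriv ?_
        simp; ring
      · exact Continuous.intervalIntegrable (by fun_prop) _ _
    rw [h0 x hx] at e
    have e2 : u (x, 0) ^ 2 = ∫ z in (-h)..(0:ℝ), 2 * (u (x, z) * uz (x, z)) := by rw [e]; ring
    rw [e2]
    apply intervalIntegral.integral_mono_on (by linarith)
    · exact Continuous.intervalIntegrable (by fun_prop) _ _
    · exact Continuous.intervalIntegrable (by fun_prop) _ _
    · intro t _
      have := le_abs_self (u (x, t) * uz (x, t))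
      linarith
  calc _ ≤ ∫ x in (0:ℝ)..L, ∫ z in (-h)..(0:ℝ), 2 * |u (x, z) * uz (x, z)| := by
        apply intervalIntegral.integral_mono_on hL.le
        · exact Continuous.intervalIntegrable (by fun_prop) _ _
        · apply Continuous.intervalIntegrable
          apply intervalIntegral.continuous_parametric_intervalIntegral_of_continuous'
          unfold Function.uncurry
          fun_prop
        · exact h1
    _ = ∫ p in dom L h, 2 * |u p * uz p| := by
        rw [aux_dom L h hL.le hh.le _ (by fun_prop)]
    _ = 2 * ∫ p in dom L h, |u p * uz p| := by rw [MeasureTheory.integral_const_mul]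
    _ ≤ _ := by
        have := aux_cs_abs L h u uz hu huz
        linarith

/-- trace at the bottom -/
theorem aux_bot (L h : ℝ) (hL : 0 < L) (hh : 0 < h) (u uz : ℝ × ℝ → ℝ) (hu : Continuous u)
    (huz : Continuous uz) (hd : ∀ x z, HasDerivAt (fun t => u (x, t)) (uz (x, z)) z) :
    ∫ x in (0:ℝ)..L, u (x, -h) ^ 2 ≤ (1 / h) * l2 L h u ^ 2 + 2 * (l2 L h u * l2 L h uz) := by
  have h1 : ∀ x ∈ Icc (0:ℝ) L, u (x, -h) ^ 2 ≤
      ∫ z in (-h)..(0:ℝ), ((1 / h) * u (x, z) ^ 2 + 2 * |u (x, z) * uz (x, z)|) := by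
    intro x hx
    have e : ∫ z in (-h)..(0:ℝ), ((1 / h) * u (x, z) ^ 2
        + (z / h) * (2 * (u (x, z) * uz (x, z)))) =
        (0 / h) * u (x, 0) ^ 2 - (-h / h) * u (x, -h) ^ 2 := by
      apply intervalIntegral.integral_eq_sub_of_hasDerivAt
        (f := fun t => (t / h) * u (x, t) ^ 2)
      · intro t _
        refine (((hasDerivAt_id t).div_const h).mul ((hd x t).pow 2)).congr_deriv ?_
        simp only [id, Pi.pow_apply]; push_cast; ring
      · exact Continuous.intervalIntegrable (by fun_prop) _ _
    have e2 : u (x, -h) ^ 2 = ∫ z in (-h)..(0:ℝ), ((1 / h) * u (x, z) ^ 2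
        + (z / h) * (2 * (u (x, z) * uz (x, z)))) := by rw [e]; field_simp; ring
    rw [e2]
    apply intervalIntegral.integral_mono_on (by linarith)
    · exact Continuous.intervalIntegrable (by fun_prop) _ _
    · exact Continuous.intervalIntegrable (by fun_prop) _ _
    · intro t ht
      have a1 : |t / h| ≤ 1 := by
        rw [abs_div, abs_of_pos hh, div_le_one hh, abs_of_nonpos ht.2]
        linarith [ht.1]
      have a2 : (t / h) * (u (x, t) * uz (x, t)) ≤ |u (x, t) * uz (x, t)| := by
        refine (le_abs_self _).trans ?_
        rw [abs_mul]
        exact mul_le_of_le_one_left (abs_nonneg _) a1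
      linarith
  calc _ ≤ ∫ x in (0:ℝ)..L,
      ∫ z in (-h)..(0:ℝ), ((1 / h) * u (x, z) ^ 2 + 2 * |u (x, z) * uz (x, z)|) := by
        apply intervalIntegral.integral_mono_on hL.le
        · exact Continuous.intervalIntegrable (by fun_prop) _ _
        · apply Continuous.intervalIntegrable
          apply intervalIntegral.continuous_parametric_intervalIntegral_of_continuous'
          unfold Function.uncurry
          fun_prop
        · exact h1
    _ = ∫ p in dom L h, ((1 / h) * u p ^ 2 + 2 * |u p * uz p|) := by
        rw [aux_dom L h hL.le hh.le _ (by fun_prop)]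
    _ = (1 / h) * (∫ p in dom L h, u p ^ 2) + 2 * ∫ p in dom L h, |u p * uz p| := by
        rw [MeasureTheory.integral_add, MeasureTheory.integral_const_mul, MeasureTheory.integral_const_mul]
        · exact aux_integrable L h _ (by fun_prop)
        · exact aux_integrable L h _ (by fun_prop)
    _ ≤ _ := by
        have := aux_cs_abs L h u uz hu huz
        rw [aux_l2_sq]
        linarith

/-- trilinear estimate -/
theorem aux_tri (L h : ℝ) (hL : 0 < L) (hh : 0 < h) (b : ℝ → ℝ) (u ux : ℝ × ℝ → ℝ)
    (hb : Continuous b) (hu : Continuous u) (hux : Continuous ux) (K B : ℝ)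
    (hK : ∀ x ∈ Icc (0:ℝ) L, ∫ z in (-h)..(0:ℝ), u (x, z) ^ 2 ≤ K)
    (hK0 : 0 ≤ K) (hB : ∫ x in (0:ℝ)..L, b x ^ 2 ≤ B) :
    |∫ p in dom L h, b p.1 * (u p * ux p)| ≤ Real.sqrt (B * K) * l2 L h ux := by
  have h1 := aux_cs L h (fun p => b p.1 * u p) ux (by fun_prop) hux
  have h2 : l2 L h (fun p => b p.1 * u p) ≤ Real.sqrt (B * K) := by
    unfold l2
    apply Real.sqrt_le_sqrt
    rw [aux_dom L h hL.le hh.le _ (by fun_prop)]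
    calc _ ≤ ∫ x in (0:ℝ)..L, b x ^ 2 * K := by
          apply intervalIntegral.integral_mono_on hL.le
          · apply Continuous.intervalIntegrable
            apply intervalIntegral.continuous_parametric_intervalIntegral_of_continuous'
            unfold Function.uncurry
            fun_prop
          · exact Continuous.intervalIntegrable (by fun_prop) _ _
          · intro x hx
            simp only [mul_pow]
            rw [intervalIntegral.integral_const_mul]
            exact mul_le_mul_of_nonneg_left (hK x hx) (sq_nonneg _)
      _ = (∫ x in (0:ℝ)..L, b x ^ 2) * K := by rw [intervalIntegral.integral_mul_const]
      _ ≤ _ := mul_le_mul_of_nonneg_right hB hK0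
  calc _ = |∫ p in dom L h, b p.1 * u p * ux p| := by simp only [mul_assoc]
    _ ≤ _ := h1
    _ ≤ _ := mul_le_mul_of_nonneg_right h2 (aux_l2_nonneg _ _ _)

/-- vertical velocity vanishes at the bottom -/
theorem aux_w_bot (L h : ℝ) (hh : 0 < h) (u ux : ℝ × ℝ → ℝ) (hu : Continuous u)
    (hux : Continuous ux) (hd : ∀ x z, HasDerivAt (fun t => u (t, z)) (ux (x, z)) x)
    (hm : ∀ x ∈ Icc (0:ℝ) L, (∫ z in (-h)..(0:ℝ), u (x, z)) = 0) (x : ℝ)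
    (hx : x ∈ Ioo (0:ℝ) L) : ∫ z in (-h)..(0:ℝ), ux (x, z) = 0 := by
  have hg : Continuous fun x => ∫ z in (-h)..(0:ℝ), ux (x, z) := by
    apply intervalIntegral.continuous_parametric_intervalIntegral_of_continuous'
    unfold Function.uncurry
    fun_prop
  have h1 : ∀ b ∈ Ioo (0:ℝ) L, ∫ x in (0:ℝ)..b, ∫ z in (-h)..(0:ℝ), ux (x, z) = 0 := by
    intro b hb
    rw [← aux_dom b h hb.1.le hh.le ux hux, aux_dom_swap b h hb.1.le hh.le ux hux]
    have : ∀ z, ∫ x in (0:ℝ)..b, ux (x, z) = u (b, z) - u (0, z) := by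
      intro z
      apply intervalIntegral.integral_eq_sub_of_hasDerivAt (f := fun t => u (t, z))
      · intro t _; exact hd t z
      · exact Continuous.intervalIntegrable (by fun_prop) _ _
    simp only [this]
    rw [intervalIntegral.integral_sub, hm b ⟨hb.1.le, hb.2.le⟩,
      hm 0 ⟨le_rfl, (hb.1.trans hb.2).le⟩, sub_zero]
    · exact Continuous.intervalIntegrable (by fun_prop) _ _
    · exact Continuous.intervalIntegrable (by fun_prop) _ _
  have h2 := (hg.integral_hasStrictDerivAt 0 x).hasDerivAt
  have h3 : HasDerivAt (fun b => ∫ x in (0:ℝ)..b, ∫ z in (-h)..(0:ℝ), ux (x, z)) 0 x := by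
    apply (hasDerivAt_const x (0:ℝ)).congr_of_eventuallyEq
    filter_upwards [Ioo_mem_nhds hx.1 hx.2] with b hb
    exact h1 b hb
  exact h2.unique h3

theorem aux_core (L h α : ℝ) (hL : 0 < L) (hh : 0 < h) (u ux uz uxz uzz w : ℝ × ℝ → ℝ)
    (hu : Continuous u) (hux : Continuous ux) (huz : Continuous uz) (huxz : Continuous uxz)
    (huzz : Continuous uzz) (hw : Continuous w)
    (dx : ∀ x z, HasDerivAt (fun t => u (t, z)) (ux (x, z)) x)
    (dz : ∀ x z, HasDerivAt (fun t => u (x, t)) (uz (x, z)) z)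
    (dxz : ∀ x z, HasDerivAt (fun t => ux (x, t)) (uxz (x, z)) z)
    (dzx : ∀ x z, HasDerivAt (fun t => uz (t, z)) (uxz (x, z)) x)
    (dzz : ∀ x z, HasDerivAt (fun t => uz (x, t)) (uzz (x, z)) z)
    (dw : ∀ x z, HasDerivAt (fun t => w (x, t)) (-ux (x, z)) z)
    (w0 : ∀ x, w (x, 0) = 0) (wh : ∀ x ∈ Ioo (0:ℝ) L, w (x, -h) = 0)
    (hlat : ∀ z ∈ Icc (-h) (0:ℝ), u (0, z) = 0 ∧ u (L, z) = 0)
    (hbot : ∀ x ∈ Icc (0:ℝ) L, u (x, -h) = 0)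
    (htop : ∀ x ∈ Icc (0:ℝ) L, uz (x, 0) + α * u (x, 0) = 0) :
    ∫ p in dom L h, (u p * ux p + w p * uz p) * (-(Qop h uzz p)) =
      (∫ p in dom L h, ((2 / h) * -uz (p.1, -h)) * (u p * ux p))
      + ∫ p in dom L h, ((2 / h) * uz (p.1, 0)) * (u p * ux p) := by
  set m : ℝ → ℝ := fun x => (1 / h) * (uz (x, 0) - uz (x, -h)) with hm
  have hmc : Continuous m := by rw [hm]; fun_prop
  have hQ : ∀ p, Qop h uzz p = uzz p - m p.1 := by
    intro p
    unfold Qop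
    rw [hm]
    congr 2
    apply intervalIntegral.integral_eq_sub_of_hasDerivAt (f := fun t => uz (p.1, t))
    · intro t _; exact dzz _ _
    · exact Continuous.intervalIntegrable (by fun_prop) _ _
  set Φ' : ℝ × ℝ → ℝ := fun p =>
    -(uz p * ux p * uz p + u p * uxz p * uz p + u p * ux p * uzz p
      + (-ux p * (uz p ^ 2 / 2) + w p * (uz p * uzz p)))
      + m p.1 * (-ux p * u p + w p * uz p) with hΦ'
  set Ψ' : ℝ × ℝ → ℝ := fun p => ux p * (uz p ^ 2 / 2) + u p * (uz p * uxz p) with hΨ'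
  have hΦc : Continuous Φ' := by rw [hΦ']; fun_prop
  have hΨc : Continuous Ψ' := by rw [hΨ']; fun_prop
  have split : ∫ p in dom L h, (u p * ux p + w p * uz p) * (-(Qop h uzz p)) =
      ∫ p in dom L h, (((Φ' p + Ψ' p) + ((2 / h) * -uz (p.1, -h)) * (u p * ux p))
        + ((2 / h) * uz (p.1, 0)) * (u p * ux p)) := by
    congr 1
    ext p
    rw [hQ, hΦ', hΨ', hm]
    ring
  have iΦ : ∫ p in dom L h, Φ' p = 0 := by
    rw [aux_dom L h hL.le hh.le _ hΦc]
    have e1 : ∀ x, ∫ z in (-h)..(0:ℝ), Φ' (x, z) =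
        (-(u (x, 0) * ux (x, 0) * uz (x, 0) + w (x, 0) * (uz (x, 0) ^ 2 / 2))
          + m x * (w (x, 0) * u (x, 0)))
        - (-(u (x, -h) * ux (x, -h) * uz (x, -h) + w (x, -h) * (uz (x, -h) ^ 2 / 2))
          + m x * (w (x, -h) * u (x, -h))) := by
      intro x
      apply intervalIntegral.integral_eq_sub_of_hasDerivAt (f := fun z =>
        (-(u (x, z) * ux (x, z) * uz (x, z) + w (x, z) * (uz (x, z) ^ 2 / 2))
          + m x * (w (x, z) * u (x, z))))
      · intro t _
        refine ((((((dz x t).mul (dxz x t)).mul (dzz x t)).add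
          ((dw x t).mul (((dzz x t).pow 2).div_const 2))).neg).add
          (((dw x t).mul (dz x t)).const_mul (m x))).congr_deriv ?_
        simp only [hΦ', Pi.mul_apply, Pi.pow_apply]; push_cast; ring
      · exact Continuous.intervalIntegrable (by fun_prop) _ _
    have e2 : ∫ x in (0:ℝ)..L, ∫ z in (-h)..(0:ℝ), Φ' (x, z) =
        ∫ x in (0:ℝ)..L, α * (u (x, 0) ^ 2 * ux (x, 0)) := by
      rw [intervalIntegral.integral_of_le hL.le, intervalIntegral.integral_of_le hL.le,
        integral_Ioc_eq_integral_Ioo, integral_Ioc_eq_integral_Ioo]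
      apply setIntegral_congr_fun measurableSet_Ioo
      intro x hx
      have hx' : x ∈ Icc (0:ℝ) L := ⟨hx.1.le, hx.2.le⟩
      have ht : uz (x, 0) = -(α * u (x, 0)) := by linarith [htop x hx']
      simp only [e1]
      rw [w0, wh x hx, hbot x hx', ht]
      ring
    rw [e2]
    have e3 : ∫ x in (0:ℝ)..L, α * (u (x, 0) ^ 2 * ux (x, 0)) =
        α * (u (L, 0) ^ 3 / 3) - α * (u (0, 0) ^ 3 / 3) := by
      apply intervalIntegral.integral_eq_sub_of_hasDerivAt
        (f := fun x => α * (u (x, 0) ^ 3 / 3))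
      · intro t _
        refine ((((dx t 0).pow 3).div_const 3).const_mul α).congr_deriv ?_
        push_cast; ring
      · exact Continuous.intervalIntegrable (by fun_prop) _ _
    have := hlat 0 ⟨by linarith, le_rfl⟩
    rw [e3, this.1, this.2]
    ring
  have iΨ : ∫ p in dom L h, Ψ' p = 0 := by
    rw [aux_dom_swap L h hL.le hh.le _ hΨc]
    have e1 : ∀ z ∈ Icc (-h) (0:ℝ), ∫ x in (0:ℝ)..L, Ψ' (x, z) = 0 := by
      intro z hz
      have : ∫ x in (0:ℝ)..L, Ψ' (x, z) =
          u (L, z) * (uz (L, z) ^ 2 / 2) - u (0, z) * (uz (0, z) ^ 2 / 2) := by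
        apply intervalIntegral.integral_eq_sub_of_hasDerivAt
          (f := fun x => u (x, z) * (uz (x, z) ^ 2 / 2))
        · intro t _
          refine ((dx t z).mul (((dzx t z).pow 2).div_const 2)).congr_deriv ?_
          simp only [hΨ', Pi.pow_apply]; push_cast; ring
        · exact Continuous.intervalIntegrable (by fun_prop) _ _
      rw [this, (hlat z hz).1, (hlat z hz).2]
      ring
    rw [intervalIntegral.integral_congr (g := fun _ => (0:ℝ))]
    · simp
    · intro z hz
      rw [uIcc_of_le (by linarith)] at hz
      exact e1 z hz
  rw [split, MeasureTheory.integral_add, MeasureTheory.integral_add, MeasureTheory.integral_add,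
    iΦ, iΨ]
  · ring
  all_goals exact aux_integrable L h _ (by fun_prop)

theorem aux_final (α h a N ux uz f F fz : ℝ) (hh : 0 < h) (hα : 0 < α) (ha : 0 ≤ a) (hN : 0 ≤ N)
    (hux : 0 ≤ ux) (huz : 0 ≤ uz) (hf : 0 ≤ f) (hF : 0 ≤ F) (h1 : ux ≤ N)
    (h2 : uz ≤ N) (h3 : f ≤ F) (h4 : fz ≤ F) :
    Real.sqrt (((2 / h) ^ 2 * ((1 / h) * f ^ 2 + 2 * (f * fz))) * (2 * (a * ux))) * ux +
    Real.sqrt (((2 * α / h) ^ 2 * (2 * (a * uz))) * (2 * (a * ux))) * ux ≤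
    (4 * α / h + (2 / h) * Real.sqrt ((1 / h + 2) * 2)) * (a * N ^ 2 +
      f ^ ((1:ℝ)/2) * F ^ ((1:ℝ)/2) * a ^ ((1:ℝ)/2) * N ^ ((3:ℝ)/2)) := by
  have hN3 : N ^ ((3:ℝ)/2) = Real.sqrt N * N := by
    rw [Real.sqrt_eq_rpow, show (3:ℝ)/2 = 1/2 + 1 by norm_num,
      Real.rpow_add_of_nonneg hN (by norm_num) (by norm_num), Real.rpow_one]
  rw [hN3, ← Real.sqrt_eq_rpow, ← Real.sqrt_eq_rpow, ← Real.sqrt_eq_rpow]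
  have b1 : Real.sqrt (((2 / h) ^ 2 * ((1 / h) * f ^ 2 + 2 * (f * fz))) * (2 * (a * ux))) * ux ≤
      ((2 / h) * Real.sqrt ((1 / h + 2) * 2)) *
        (Real.sqrt f * Real.sqrt F * Real.sqrt a * (Real.sqrt N * N)) := by
    have i1 : (1 / h) * f ^ 2 + 2 * (f * fz) ≤ (1 / h + 2) * (f * F) := by
      have : (1 / h) * f ^ 2 ≤ (1 / h) * (f * F) := by rw [sq]; gcongr
      have : f * fz ≤ f * F := by gcongr
      linarith
    calc _ ≤ Real.sqrt (((2 / h) ^ 2 * ((1 / h + 2) * (f * F))) * (2 * (a * N))) * N := by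
          gcongr
      _ = Real.sqrt ((2 / h) ^ 2 * (((1 / h + 2) * 2) * (f * (F * (a * N))))) * N := by
          congr 2; ring
      _ = _ := by
          rw [Real.sqrt_mul (by positivity), Real.sqrt_sq (by positivity),
            Real.sqrt_mul (by positivity), Real.sqrt_mul hf, Real.sqrt_mul hF, Real.sqrt_mul ha]
          ring
  have b2 : Real.sqrt (((2 * α / h) ^ 2 * (2 * (a * uz))) * (2 * (a * ux))) * ux ≤
      (4 * α / h) * (a * N ^ 2) := by
    calc _ ≤ Real.sqrt (((2 * α / h) ^ 2 * (2 * (a * N))) * (2 * (a * N))) * N := by gcongr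
      _ = Real.sqrt (((2 * α / h) * (2 * (a * N))) ^ 2) * N := by congr 2; ring
      _ = _ := by rw [Real.sqrt_sq (by positivity)]; ring
  have p1 : 0 ≤ (4 * α / h) * (Real.sqrt f * Real.sqrt F * Real.sqrt a * (Real.sqrt N * N)) := by
    positivity
  have p2 : 0 ≤ ((2 / h) * Real.sqrt ((1 / h + 2) * 2)) * (a * N ^ 2) := by positivity
  nlinarith

theorem aux_h1n (L h : ℝ) (f : ℝ × ℝ → ℝ) :
    l2 L h f ≤ h1n L h f ∧ l2 L h (pdx f) ≤ h1n L h f ∧ l2 L h (pdz f) ≤ h1n L h f := by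
  unfold h1n
  refine ⟨?_, ?_, ?_⟩ <;> apply Real.le_sqrt_of_sq_le <;>
    nlinarith [sq_nonneg (l2 L h f), sq_nonneg (l2 L h (pdx f)), sq_nonneg (l2 L h (pdz f))]

theorem aux_dx (f : ℝ × ℝ → ℝ) (hf : Differentiable ℝ f) (x z : ℝ) :
    HasDerivAt (fun t => f (t, z)) (pdx f (x, z)) x := by
  have h1 : HasDerivAt (fun t : ℝ => (t, z)) ((1:ℝ), (0:ℝ)) x :=
    (hasDerivAt_id x).prodMk (hasDerivAt_const x z)
  exact (hf (x, z)).hasFDerivAt.comp_hasDerivAt x h1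

theorem aux_dz (f : ℝ × ℝ → ℝ) (hf : Differentiable ℝ f) (x z : ℝ) :
    HasDerivAt (fun t => f (x, t)) (pdz f (x, z)) z := by
  have h1 : HasDerivAt (fun t : ℝ => (x, t)) ((0:ℝ), (1:ℝ)) z :=
    (hasDerivAt_const z x).prodMk (hasDerivAt_id z)
  exact (hf (x, z)).hasFDerivAt.comp_hasDerivAt z h1

theorem aux_symm (u : ℝ × ℝ → ℝ) (hu : ContDiff ℝ 2 u) (p : ℝ × ℝ) :
    pdx (pdz u) p = pdz (pdx u) p := by
  have hs : IsSymmSndFDerivAt ℝ u p := hu.contDiffAt.isSymmSndFDerivAt (by simp)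
  have hd : DifferentiableAt ℝ (fderiv ℝ u) p :=
    (hu.fderiv_right (m := 1) (by norm_num)).differentiable (by norm_num) p
  have e : ∀ v, fderiv ℝ (fun q => fderiv ℝ u q v) p = (fderiv ℝ (fderiv ℝ u) p).flip v := by
    intro v
    ext y <;> rw [fderiv_clm_apply hd (differentiableAt_const v)] <;> simp
  have := hs (1, 0) (0, 1)
  show fderiv ℝ (fun q => fderiv ℝ u q (0, 1)) p (1, 0)
    = fderiv ℝ (fun q => fderiv ℝ u q (1, 0)) p (0, 1)
  rw [e, e]
  exact this

theorem stmt19 (L h : ℝ) (hL : 0 < L) (hh : 0 < h) (α : ℝ) (hα : 0 < α) :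
    ∃ c > 0, ∀ u : ℝ × ℝ → ℝ,
      ContDiff ℝ 2 u →
      (∀ z ∈ Icc (-h) (0:ℝ), u (0, z) = 0 ∧ u (L, z) = 0) →
      (∀ x ∈ Icc (0:ℝ) L, u (x, -h) = 0) →
      (∀ x ∈ Icc (0:ℝ) L, pdz u (x, 0) + α * u (x, 0) = 0) →
      (∀ x ∈ Icc (0:ℝ) L, (∫ z in (-h)..(0:ℝ), u (x, z)) = 0) →
      |∫ p in dom L h,
          (u p * pdx u p + wOp u p * pdz u p) * (-(Qop h (pdz (pdz u)) p))| ≤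
        c * (l2 L h u * h1n L h u ^ 2 +
          l2 L h (pdz u) ^ ((1:ℝ)/2) * h1n L h (pdz u) ^ ((1:ℝ)/2)
            * l2 L h u ^ ((1:ℝ)/2) * h1n L h u ^ ((3:ℝ)/2)) := by
  refine ⟨4 * α / h + (2 / h) * Real.sqrt ((1 / h + 2) * 2), by positivity, ?_⟩
  intro u hu hlat hbot htop hmean
  have cux : ContDiff ℝ 1 (pdx u) :=
    (hu.fderiv_right (m := 1) (by norm_num)).clm_apply contDiff_const
  have cuz : ContDiff ℝ 1 (pdz u) :=
    (hu.fderiv_right (m := 1) (by norm_num)).clm_apply contDiff_const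
  have cuxz : Continuous (pdz (pdx u)) :=
    ((cux.fderiv_right (m := 0) (by norm_num)).clm_apply contDiff_const).continuous
  have cuzz : Continuous (pdz (pdz u)) :=
    ((cuz.fderiv_right (m := 0) (by norm_num)).clm_apply contDiff_const).continuous
  have du := hu.differentiable (by norm_num)
  have dux := cux.differentiable (by norm_num)
  have duz := cuz.differentiable (by norm_num)
  have ku := hu.continuous
  have kux := cux.continuous
  have kuz := cuz.continuous
  have cw : Continuous (wOp u) := by
    have : wOp u = fun p => -∫ s in (0:ℝ)..p.2, pdx u (p.1, s) := by
      ext p; unfold wOp; rw [intervalIntegral.integral_symm]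
    rw [this]
    apply Continuous.neg
    apply intervalIntegral.continuous_parametric_intervalIntegral_of_continuous _ continuous_snd
    unfold Function.uncurry
    fun_prop
  have dw : ∀ x z, HasDerivAt (fun t => wOp u (x, t)) (-pdx u (x, z)) z := by
    intro x z
    have hc : Continuous fun s => pdx u (x, s) := by fun_prop
    have := ((hc.integral_hasStrictDerivAt 0 z).hasDerivAt).neg
    refine this.congr_of_eventuallyEq (Filter.Eventually.of_forall fun t => ?_)
    show (∫ s in t..0, pdx u (x, s)) = -∫ s in (0:ℝ)..t, pdx u (x, s)
    rw [intervalIntegral.integral_symm]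
  have core := aux_core L h α hL hh u (pdx u) (pdz u) (pdz (pdx u)) (pdz (pdz u)) (wOp u)
    ku kux kuz cuxz cuzz cw (aux_dx u du) (aux_dz u du) (aux_dz _ dux)
    (fun x z => by
      have := aux_dx _ duz x z
      rwa [aux_symm u hu] at this)
    (aux_dz _ duz) dw (fun x => by simp [wOp])
    (fun x hx => aux_w_bot L h hh u (pdx u) ku kux (aux_dx u du) hmean x hx)
    hlat hbot htop
  rw [core]
  have hK := aux_sup L h hL hh u (pdx u) ku kux (aux_dx u du) (fun z hz => (hlat z hz).1)
  have hK0 : 0 ≤ 2 * (l2 L h u * l2 L h (pdx u)) := by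
    have := aux_l2_nonneg L h u
    have := aux_l2_nonneg L h (pdx u)
    positivity
  have t1 := aux_tri L h hL hh (fun x => (2 / h) * -pdz u (x, -h)) u (pdx u) (by fun_prop) ku kux
    _ ((2 / h) ^ 2 * ((1 / h) * l2 L h (pdz u) ^ 2 + 2 * (l2 L h (pdz u) * l2 L h (pdz (pdz u)))))
    hK hK0 (by
      have := aux_bot L h hL hh (pdz u) (pdz (pdz u)) kuz cuzz (aux_dz _ duz)
      simp only [mul_pow, neg_sq]
      rw [intervalIntegral.integral_const_mul]
      gcongr)
  have t2 := aux_tri L h hL hh (fun x => (2 / h) * pdz u (x, 0)) u (pdx u) (by fun_prop) ku kux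
    _ ((2 * α / h) ^ 2 * (2 * (l2 L h u * l2 L h (pdz u))))
    hK hK0 (by
      have := aux_top L h hL hh u (pdz u) ku kuz (aux_dz _ du) hbot
      have e : ∫ x in (0:ℝ)..L, (2 / h * pdz u (x, 0)) ^ 2 =
          ∫ x in (0:ℝ)..L, (2 * α / h) ^ 2 * u (x, 0) ^ 2 := by
        apply intervalIntegral.integral_congr
        intro x hx
        rw [uIcc_of_le hL.le] at hx
        have ht : pdz u (x, 0) = -(α * u (x, 0)) := by linarith [htop x hx]
        simp only [ht]
        ring
      rw [e, intervalIntegral.integral_const_mul]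
      gcongr)
  refine (abs_add_le _ _).trans ((add_le_add t1 t2).trans ?_)
  obtain ⟨_, n1, n2⟩ := aux_h1n L h u
  obtain ⟨n3, _, n4⟩ := aux_h1n L h (pdz u)
  exact aux_final α h _ _ _ _ _ _ _ hh hα (aux_l2_nonneg _ _ _) (Real.sqrt_nonneg _)
    (aux_l2_nonneg _ _ _) (aux_l2_nonneg _ _ _) (aux_l2_nonneg _ _ _) (Real.sqrt_nonneg _)
    n1 n2 n3 n4
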